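/- Let p be a prime, let x : ZMod p with x ≠ 0, let s : List (ZMod p), and let a ≤ s.length. Then the fingerprint of the list obtained by deleting the first a characters satisfies φ_x(s.drop a) = (x⁻¹)^a * (φ_x(s) − φ_x(s.take a)). -/

import Mathlib

/-!
The fingerprint of a concatenation is `φ_x(s ++ t) = φ_x(s) + x ^ |s| * φ_x(t)`
(`karpRabin_append`). Applied to `s = s.take a ++ s.drop a`, where `a ≤ |s|` gives the prefix
length exactly `a`, it can be solved for `φ_x(s.drop a)` because `x` is a unit of the field `ZMod p`.
-/

/-- The Karp–Rabin fingerprint of a list `s` over `ZMod p` at evaluation point `x`: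
`φ_x(s) = ∑_{k < s.length} s[k] * x^k`. -/
def karpRabin {p : ℕ} (x : ZMod p) (s : List (ZMod p)) : ZMod p :=
  ∑ k ∈ Finset.range s.length, s.getD k 0 * x ^ k

theorem karpRabin_append {p : ℕ} (x : ZMod p) (s t : List (ZMod p)) :
    karpRabin x (s ++ t) = karpRabin x s + x ^ s.length * karpRabin x t := by
  simp only [karpRabin, List.length_append, Finset.sum_range_add, Finset.mul_sum]
  congr 1
  · refine Finset.sum_congr rfl fun k hk => ?_
    rw [List.getD_append _ _ _ _ (Finset.mem_range.mp hk)]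
  · refine Finset.sum_congr rfl fun k _ => ?_
    rw [List.getD_append_right _ _ _ _ (Nat.le_add_right _ _), Nat.add_sub_cancel_left]
    ring

theorem karpRabin_drop (p : ℕ) (hp : p.Prime) (x : ZMod p) (hx : x ≠ 0)
    (s : List (ZMod p)) (a : ℕ) (ha : a ≤ s.length) :
    karpRabin x (s.drop a) = (x⁻¹) ^ a * (karpRabin x s - karpRabin x (s.take a)) := by
  have : Fact p.Prime := ⟨hp⟩
  have h := karpRabin_append x (s.take a) (s.drop a)
  rw [List.take_append_drop, List.length_take_of_le ha] at h
  rw [h, add_sub_cancel_left, ← mul_assoc, ← mul_pow, inv_mul_cancel₀ hx, one_pow, one_mul]
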